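/- Let P be a consensus matrix satisfying P*P = PP*, with C_{P*P} := n PᵀΠP. Then J(P) ≥ (π_min³ n² / π_max) · R̄(C_{P*P}) and J_w(P) ≥ π_min³ n³ · R̄(C_{P*P}). -/

import Mathlib

open Matrix

/-- A consensus matrix: entrywise nonnegative, row-stochastic, irreducible
(for every pair of indices some power has a positive entry), with positive diagonal. -/
def IsConsensus {n : ℕ} (P : Matrix (Fin n) (Fin n) ℝ) : Prop :=
  (∀ i j, 0 ≤ P i j) ∧ (∀ i, (∑ j, P i j) = 1) ∧
  (∀ i j, ∃ k : ℕ, 0 < (P ^ k) i j) ∧ (∀ i, 0 < P i i)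

/-- `mu` is the invariant measure of `P`: strictly positive, sums to `1`,
and is a left fixed vector of `P`. -/
def IsInvMeasure {n : ℕ} (P : Matrix (Fin n) (Fin n) ℝ) (mu : Fin n → ℝ) : Prop :=
  (∀ i, 0 < mu i) ∧ (∑ i, mu i) = 1 ∧ (∀ j, (∑ i, mu i * P i j) = mu j)

/-- The time reversal `P* = Π⁻¹ Pᵀ Π` with `Π = diag(mu)`. -/
noncomputable def Pstar {n : ℕ} (P : Matrix (Fin n) (Fin n) ℝ) (mu : Fin n → ℝ) :
    Matrix (Fin n) (Fin n) ℝ :=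
  Matrix.diagonal (fun i => (mu i)⁻¹) * Pᵀ * Matrix.diagonal mu

/-- The graph Laplacian `L(C) = diag(C 𝟙) − C`. -/
def lap {n : ℕ} (C : Matrix (Fin n) (Fin n) ℝ) : Matrix (Fin n) (Fin n) ℝ :=
  Matrix.diagonal (fun i => ∑ j, C i j) - C

/-- A conductance matrix: symmetric, entrywise nonnegative, irreducible. -/
def IsConductance {n : ℕ} (C : Matrix (Fin n) (Fin n) ℝ) : Prop :=
  Cᵀ = C ∧ (∀ i j, 0 ≤ C i j) ∧ (∀ i j, ∃ k : ℕ, 0 < (C ^ k) i j)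

/-- The effective resistance between `a` and `b`: `v a - v b` for a solution `v`
of `L(C) v = e_a - e_b` (junk value `0` if no solution exists). -/
noncomputable def effRes {n : ℕ} (C : Matrix (Fin n) (Fin n) ℝ) (a b : Fin n) : ℝ :=
  open Classical in
  if h : ∃ v : Fin n → ℝ, lap C *ᵥ v = Pi.single a 1 - Pi.single b 1 then
    h.choose a - h.choose b
  else 0

/-- The average effective resistance `(1/(2 n²)) Σ_{u,v} R_{uv}(C)`. -/
noncomputable def avgRes {n : ℕ} (C : Matrix (Fin n) (Fin n) ℝ) : ℝ :=
  (1 / (2 * (n : ℝ) ^ 2)) * ∑ u, ∑ v, effRes C u v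

/-- The unit-conductance matrix of the undirected graph associated with `P`:
edge `{u,v}` iff `P u v ≠ 0` or `P v u ≠ 0`. -/
noncomputable def adjMat {n : ℕ} (P : Matrix (Fin n) (Fin n) ℝ) : Matrix (Fin n) (Fin n) ℝ :=
  Matrix.of fun i j => if i ≠ j ∧ (P i j ≠ 0 ∨ P j i ≠ 0) then (1 : ℝ) else 0

/-- The LQ cost `J(P) = (1/n) Σ_{t≥0} ‖P^t − 𝟙 muᵀ‖_F²`. -/
noncomputable def LQcost {n : ℕ} (P : Matrix (Fin n) (Fin n) ℝ) (mu : Fin n → ℝ) : ℝ :=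
  (1 / (n : ℝ)) *
    ∑' t : ℕ, ∑ i, ∑ j,
      ((P ^ t - Matrix.vecMulVec (fun _ => 1) mu : Matrix (Fin n) (Fin n) ℝ) i j) ^ 2

/-- The weighted LQ cost `J_w(P)`. -/
noncomputable def LQcostW {n : ℕ} (P : Matrix (Fin n) (Fin n) ℝ) (mu : Fin n → ℝ) : ℝ :=
  ∑' t : ℕ, Matrix.trace ((1 - Matrix.vecMulVec mu (fun _ => 1)) * Pᵀ ^ t *
    Matrix.diagonal mu * P ^ t * (1 - Matrix.vecMulVec (fun _ => 1) mu))

/-- The Green matrix `G(P) = Σ_{t≥0} (P^t − 𝟙 muᵀ)`. -/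
noncomputable def Green {n : ℕ} (P : Matrix (Fin n) (Fin n) ℝ) (mu : Fin n → ℝ) :
    Matrix (Fin n) (Fin n) ℝ :=
  ∑' t : ℕ, (P ^ t - Matrix.vecMulVec (fun _ => 1) mu)

/-- Out-degree (excluding self-loops) of node `i` in the directed graph of `P`. -/
noncomputable def outDeg {n : ℕ} (P : Matrix (Fin n) (Fin n) ℝ) (i : Fin n) : ℕ :=
  (Finset.univ.filter fun j => j ≠ i ∧ P i j ≠ 0).card

/-- In-degree (excluding self-loops) of node `j` in the directed graph of `P`. -/
noncomputable def inDeg {n : ℕ} (P : Matrix (Fin n) (Fin n) ℝ) (j : Fin n) : ℕ :=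
  (Finset.univ.filter fun i => i ≠ j ∧ P i j ≠ 0).card

/-- the projector matrix -/
noncomputable def EE {n : ℕ} (mu : Fin n → ℝ) : Matrix (Fin n) (Fin n) ℝ :=
  Matrix.vecMulVec (fun _ => 1) mu

section
variable {n : ℕ} {P : Matrix (Fin n) (Fin n) ℝ} {mu : Fin n → ℝ}

lemma EE_apply (i j : Fin n) : EE mu i j = mu j := by simp [EE, vecMulVec_apply]

lemma Pstar_apply (i j : Fin n) : Pstar P mu i j = (mu i)⁻¹ * P j i * mu j := by
  simp [Pstar, Matrix.mul_diagonal, Matrix.diagonal_mul]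

lemma stoch_mul_EE {A : Matrix (Fin n) (Fin n) ℝ} (h : ∀ i, ∑ j, A i j = 1) :
    A * EE mu = EE mu := by
  ext i j
  simp only [Matrix.mul_apply, EE_apply]
  rw [← Finset.sum_mul, h, one_mul]

lemma EE_mul_inv {A : Matrix (Fin n) (Fin n) ℝ} (h : ∀ j, ∑ i, mu i * A i j = mu j) :
    EE mu * A = EE mu := by
  ext i j
  simp only [Matrix.mul_apply, EE_apply]
  exact h j

lemma Pstar_row (hmu : IsInvMeasure P mu) (i : Fin n) : ∑ j, Pstar P mu i j = 1 := by
  have := (hmu.1 i).ne'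
  simp only [Pstar_apply, mul_assoc]
  rw [← Finset.mul_sum, Finset.sum_congr rfl (fun j _ => mul_comm (P j i) (mu j)), hmu.2.2 i]
  field_simp

lemma Pstar_inv (hP : IsConsensus P) (hmu : IsInvMeasure P mu) (j : Fin n) :
    ∑ i, mu i * Pstar P mu i j = mu j := by
  have : ∀ i, mu i * Pstar P mu i j = P j i * mu j := by
    intro i
    have := (hmu.1 i).ne'
    rw [Pstar_apply]; field_simp
  rw [Finset.sum_congr rfl (fun i _ => this i), ← Finset.sum_mul, hP.2.1, one_mul]

lemma EE_idem (hmu : IsInvMeasure P mu) : EE mu * EE mu = EE mu := by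
  apply EE_mul_inv
  intro j
  simp only [EE_apply]
  rw [← Finset.sum_mul, hmu.2.1, one_mul]

lemma diag_Pstar (hmu : IsInvMeasure P mu) :
    Matrix.diagonal mu * Pstar P mu = Pᵀ * Matrix.diagonal mu := by
  ext i j
  have := (hmu.1 i).ne'
  rw [Matrix.diagonal_mul, Pstar_apply, Matrix.mul_diagonal, Matrix.transpose_apply]
  field_simp

lemma diag_pow (hmu : IsInvMeasure P mu) (hcomm : Pstar P mu * P = P * Pstar P mu) (t : ℕ) :
    Matrix.diagonal mu * (Pstar P mu * P) ^ t = Pᵀ ^ t * Matrix.diagonal mu * P ^ t := by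
  have h1 : SemiconjBy (Matrix.diagonal mu) (Pstar P mu) Pᵀ := diag_Pstar hmu
  have h2 := (h1.pow_right t).eq
  have h3 : Commute (Pstar P mu) P := hcomm
  rw [h3.mul_pow, ← mul_assoc, h2]

lemma EEt_diag : (EE mu)ᵀ * Matrix.diagonal mu = Matrix.diagonal mu * EE mu := by
  ext i j
  rw [Matrix.mul_diagonal, Matrix.diagonal_mul, Matrix.transpose_apply, EE_apply, EE_apply]

lemma pow_mul_EE {A : Matrix (Fin n) (Fin n) ℝ} (h : A * EE mu = EE mu) (t : ℕ) :
    A ^ t * EE mu = EE mu := by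
  induction t with
  | zero => simp
  | succ t ih => rw [pow_succ, mul_assoc, h, ih]

lemma EE_mul_pow {A : Matrix (Fin n) (Fin n) ℝ} (h : EE mu * A = EE mu) (t : ℕ) :
    EE mu * A ^ t = EE mu := by
  induction t with
  | zero => simp
  | succ t ih => rw [pow_succ, ← mul_assoc, ih, h]

lemma key_id (hP : IsConsensus P) (hmu : IsInvMeasure P mu)
    (hcomm : Pstar P mu * P = P * Pstar P mu) (t : ℕ) :
    Matrix.diagonal mu * ((Pstar P mu * P) ^ t - EE mu) =
      (P ^ t - EE mu)ᵀ * Matrix.diagonal mu * (P ^ t - EE mu) := by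
  have hPE : P ^ t * EE mu = EE mu := pow_mul_EE (stoch_mul_EE hP.2.1) t
  have hEP : EE mu * P ^ t = EE mu := EE_mul_pow (EE_mul_inv hmu.2.2) t
  have hEE := EE_idem hmu
  have hd := EEt_diag (mu := mu)
  have h1 : (P ^ t)ᵀ * Matrix.diagonal mu * EE mu = Matrix.diagonal mu * EE mu := by
    rw [mul_assoc, ← hd, ← mul_assoc, ← Matrix.transpose_mul, hEP]
  rw [mul_sub, diag_pow hmu hcomm, Matrix.transpose_sub, sub_mul, sub_mul, mul_sub, mul_sub, h1,
    hd, mul_assoc _ (EE mu) (P ^ t), hEP, mul_assoc _ (EE mu) (EE mu), hEE, Matrix.transpose_pow]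
  simp

lemma key_entry (hP : IsConsensus P) (hmu : IsInvMeasure P mu)
    (hcomm : Pstar P mu * P = P * Pstar P mu) (t : ℕ) (i j : Fin n) :
    mu i * (((Pstar P mu * P) ^ t - EE mu) i j) =
      ∑ k, mu k * ((P ^ t - EE mu) k i * (P ^ t - EE mu) k j) := by
  have := congrFun (congrFun (key_id hP hmu hcomm t) i) j
  rw [Matrix.diagonal_mul] at this
  rw [this, Matrix.mul_apply]
  refine Finset.sum_congr rfl fun k _ => ?_
  rw [Matrix.mul_diagonal, Matrix.transpose_apply]; ring

lemma trace_term (hP : IsConsensus P) (hmu : IsInvMeasure P mu)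
    (hcomm : Pstar P mu * P = P * Pstar P mu) (t : ℕ) :
    Matrix.trace ((1 - Matrix.vecMulVec mu (fun _ => 1)) * Pᵀ ^ t *
    Matrix.diagonal mu * P ^ t * (1 - Matrix.vecMulVec (fun _ => 1) mu)) =
    ∑ i, mu i * (((Pstar P mu * P) ^ t - EE mu) i i) := by
  have hPE : P ^ t * EE mu = EE mu := pow_mul_EE (stoch_mul_EE hP.2.1) t
  have hEP : EE mu * P ^ t = EE mu := EE_mul_pow (EE_mul_inv hmu.2.2) t
  have e1 : (1 - Matrix.vecMulVec mu (fun _ => 1)) * Pᵀ ^ t = (P ^ t - EE mu)ᵀ := by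
    have : Matrix.vecMulVec mu (fun _ => (1:ℝ)) = (EE mu)ᵀ := by
      ext i j; simp [EE, vecMulVec_apply]
    rw [this, ← Matrix.transpose_pow, sub_mul, ← Matrix.transpose_mul, hPE, one_mul,
      Matrix.transpose_sub]
  have e2 : P ^ t * (1 - Matrix.vecMulVec (fun _ => 1) mu) = P ^ t - EE mu := by
    change P ^ t * (1 - EE mu) = _
    rw [mul_sub, hPE, mul_one]
  rw [mul_assoc _ (P ^ t), e2, e1, ← key_id hP hmu hcomm, Matrix.trace]
  simp [Matrix.diagonal_mul]

lemma variance (hP : IsConsensus P) (hmu : IsInvMeasure P mu) (v : Fin n → ℝ) :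
    ∑ i, mu i * ∑ j, P i j * (v j - (P *ᵥ v) i) ^ 2 =
      ∑ i, mu i * (v i * (v i - ((Pstar P mu * P) *ᵥ v) i)) := by
  have h1 : ∀ i, ∑ j, P i j * (v j - (P *ᵥ v) i) ^ 2 =
      ∑ j, P i j * v j ^ 2 - (P *ᵥ v) i ^ 2 := by
    intro i
    have e : (P *ᵥ v) i = ∑ j, P i j * v j := rfl
    have : ∀ j, P i j * (v j - (P *ᵥ v) i) ^ 2 = P i j * v j ^ 2
        - 2 * (P *ᵥ v) i * (P i j * v j) + P i j * (P *ᵥ v) i ^ 2 := by intro j; ring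
    rw [Finset.sum_congr rfl (fun j _ => this j), Finset.sum_add_distrib, Finset.sum_sub_distrib,
      ← Finset.mul_sum, ← e, ← Finset.sum_mul, hP.2.1]
    ring
  have h2 : ∑ i, mu i * ∑ j, P i j * v j ^ 2 = ∑ j, mu j * v j ^ 2 := by
    simp only [Finset.mul_sum]
    rw [Finset.sum_comm]
    refine Finset.sum_congr rfl fun j _ => ?_
    rw [← hmu.2.2 j, Finset.sum_mul]
    exact Finset.sum_congr rfl fun i _ => by ring
  have h3 : ∑ i, mu i * (v i * ((Pstar P mu * P) *ᵥ v) i) = ∑ i, mu i * (P *ᵥ v) i ^ 2 := by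
    rw [← Matrix.mulVec_mulVec]
    have hw : ∀ j, (P *ᵥ v) j = ∑ i, P j i * v i := fun j => rfl
    clear h1
    generalize P *ᵥ v = w at *
    have : ∀ i, mu i * (v i * (Pstar P mu *ᵥ w) i) = ∑ j, P j i * mu j * v i * w j := by
      intro i
      have := (hmu.1 i).ne'
      simp only [Matrix.mulVec, dotProduct, Pstar_apply, Finset.mul_sum]
      refine Finset.sum_congr rfl fun j _ => ?_
      field_simp
    simp only [this]
    rw [Finset.sum_comm]
    refine Finset.sum_congr rfl fun j _ => ?_
    rw [sq, ← mul_assoc, ← Finset.sum_mul]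
    congr 1
    rw [hw, Finset.mul_sum]
    exact Finset.sum_congr rfl fun i _ => by ring
  simp only [h1, mul_sub, Finset.sum_sub_distrib]
  rw [h2, h3]
  congr 1
  exact Finset.sum_congr rfl fun i _ => by ring

lemma variance_nonneg (hP : IsConsensus P) (hmu : IsInvMeasure P mu) (v : Fin n → ℝ) :
    0 ≤ ∑ i, mu i * (v i * (v i - ((Pstar P mu * P) *ᵥ v) i)) := by
  rw [← variance hP hmu]
  exact Finset.sum_nonneg fun i _ => mul_nonneg (hmu.1 i).le
    (Finset.sum_nonneg fun j _ => mul_nonneg (hP.1 i j) (sq_nonneg _))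

lemma const_of_fixed (hP : IsConsensus P) (hmu : IsInvMeasure P mu) (v : Fin n → ℝ)
    (hv : (Pstar P mu * P) *ᵥ v = v) (i j : Fin n) : v i = v j := by
  have h0 := variance hP hmu v
  rw [hv] at h0
  simp only [sub_self, mul_zero, Finset.sum_const_zero] at h0
  have h1 : ∀ i j, P i j * (v j - (P *ᵥ v) i) ^ 2 = 0 := by
    intro i j
    rw [Finset.sum_eq_zero_iff_of_nonneg (fun i _ => mul_nonneg (hmu.1 i).le
      (Finset.sum_nonneg fun j _ => mul_nonneg (hP.1 i j) (sq_nonneg _)))] at h0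
    have h2 := h0 i (Finset.mem_univ _)
    have h3 := (mul_eq_zero.1 h2).resolve_left (hmu.1 i).ne'
    rw [Finset.sum_eq_zero_iff_of_nonneg
      (fun j _ => mul_nonneg (hP.1 i j) (sq_nonneg _))] at h3
    exact h3 j (Finset.mem_univ _)
  have h2 : ∀ i j, P i j ≠ 0 → v j = (P *ᵥ v) i := by
    intro i j h
    have := (mul_eq_zero.1 (h1 i j)).resolve_left h
    have := pow_eq_zero_iff (two_ne_zero) |>.1 this
    linarith
  have h3 : ∀ i j, P i j ≠ 0 → v i = v j := fun i j h => by
    rw [h2 i j h, h2 i i (hP.2.2.2 i).ne']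
  have h4 : ∀ k : ℕ, ∀ i j, (P ^ k) i j ≠ 0 → v i = v j := by
    intro k
    induction k with
    | zero =>
      intro i j h
      by_cases hij : i = j
      · rw [hij]
      · simp [Matrix.one_apply, hij] at h
    | succ k ih =>
      intro i j h
      rw [pow_succ, Matrix.mul_apply] at h
      obtain ⟨l, _, hl⟩ := Finset.exists_ne_zero_of_sum_ne_zero h
      rw [ih i l (left_ne_zero_of_mul hl), h3 l j (right_ne_zero_of_mul hl)]
  obtain ⟨k, hk⟩ := hP.2.2.1 i j
  exact h4 k i j hk.ne'

lemma exists_green (hP : IsConsensus P) (hmu : IsInvMeasure P mu) :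
    ∃ G : Matrix (Fin n) (Fin n) ℝ, (1 - Pstar P mu * P) * G = 1 - EE mu ∧
      G * (1 - Pstar P mu * P) = 1 - EE mu ∧ EE mu * G = 0 := by
  set Q := Pstar P mu * P with hQ
  have hEE := EE_idem hmu
  have hQE : Q * EE mu = EE mu := by
    rw [hQ, mul_assoc, stoch_mul_EE hP.2.1, stoch_mul_EE (Pstar_row hmu)]
  have hEQ : EE mu * Q = EE mu := by
    rw [hQ, ← mul_assoc, EE_mul_inv (Pstar_inv hP hmu), EE_mul_inv hmu.2.2]
  set A := 1 - Q + EE mu with hA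
  have hEA : EE mu * A = EE mu := by rw [hA, mul_add, mul_sub, hEQ, hEE]; simp
  have hAE : A * EE mu = EE mu := by rw [hA, add_mul, sub_mul, hQE, hEE]; simp
  have hu : IsUnit A.det := by
    rw [isUnit_iff_ne_zero]
    intro hdet
    obtain ⟨v, hv0, hv⟩ := Matrix.exists_mulVec_eq_zero_iff.2 hdet
    have e1 : EE mu *ᵥ v = 0 := by
      rw [← hEA, ← Matrix.mulVec_mulVec, hv, Matrix.mulVec_zero]
    have e2 : Q *ᵥ v = v := by
      rw [hA, Matrix.add_mulVec, Matrix.sub_mulVec, e1, Matrix.one_mulVec, add_zero,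
        sub_eq_zero] at hv
      exact hv.symm
    apply hv0
    funext i
    have e3 := congrFun e1 i
    have e4 : (EE mu *ᵥ v) i = v i := by
      simp only [Matrix.mulVec, dotProduct, EE_apply]
      rw [Finset.sum_congr rfl (fun j _ => by rw [const_of_fixed hP hmu v e2 j i]),
        ← Finset.sum_mul, hmu.2.1, one_mul]
    rw [← e4, e3]
  have z1 := Matrix.mul_nonsing_inv A hu
  have z2 := Matrix.nonsing_inv_mul A hu
  have z3 : EE mu * A⁻¹ = EE mu := by
    conv_lhs => rw [← hEA]
    rw [mul_assoc, z1, mul_one]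
  have z4 : A⁻¹ * EE mu = EE mu := by
    conv_lhs => rw [← hAE]
    rw [← mul_assoc, z2, one_mul]
  have hq : 1 - Q = A - EE mu := by rw [hA]; abel
  refine ⟨A⁻¹ - EE mu, ?_, ?_, ?_⟩
  · rw [hq, sub_mul, mul_sub, mul_sub, z1, hAE, z3, hEE]; abel
  · rw [hq, mul_sub, sub_mul, sub_mul, z2, hEA, z4, hEE]; abel
  · rw [mul_sub, z3, hEE, sub_self]

lemma Q_row (hP : IsConsensus P) (hmu : IsInvMeasure P mu) (t : ℕ) :
    (∀ i j, 0 ≤ ((Pstar P mu * P) ^ t) i j) ∧ ∀ i, ∑ j, ((Pstar P mu * P) ^ t) i j = 1 := by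
  have h1 : Pstar P mu ∈ Matrix.rowStochastic ℝ (Fin n) := by
    rw [Matrix.mem_rowStochastic_iff_sum]
    refine ⟨fun i j => ?_, Pstar_row hmu⟩
    rw [Pstar_apply]
    exact mul_nonneg (mul_nonneg (inv_nonneg.2 (hmu.1 i).le) (hP.1 _ _)) (hmu.1 j).le
  have h2 : P ∈ Matrix.rowStochastic ℝ (Fin n) := by
    rw [Matrix.mem_rowStochastic_iff_sum]
    exact ⟨hP.1, hP.2.1⟩
  have h3 := pow_mem (mul_mem h1 h2) t
  rwa [Matrix.mem_rowStochastic_iff_sum] at h3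

lemma Q_le_one (hP : IsConsensus P) (hmu : IsInvMeasure P mu) (t : ℕ) (i j : Fin n) :
    ((Pstar P mu * P) ^ t) i j ≤ 1 := by
  rw [← (Q_row hP hmu t).2 i]
  exact Finset.single_le_sum (f := fun j => ((Pstar P mu * P) ^ t) i j)
    (fun j _ => (Q_row hP hmu t).1 i j) (Finset.mem_univ j)

lemma partial_sum (hP : IsConsensus P) (hmu : IsInvMeasure P mu)
    {G : Matrix (Fin n) (Fin n) ℝ} (hG : (1 - Pstar P mu * P) * G = 1 - EE mu) (T : ℕ) :
    ∑ t ∈ Finset.range T, ((Pstar P mu * P) ^ t - EE mu) = (1 - (Pstar P mu * P) ^ T) * G := by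
  have hQE : Pstar P mu * P * EE mu = EE mu := by
    rw [mul_assoc, stoch_mul_EE hP.2.1, stoch_mul_EE (Pstar_row hmu)]
  induction T with
  | zero => simp
  | succ T ih =>
    have : (Pstar P mu * P) ^ T - EE mu = (Pstar P mu * P) ^ T * (1 - EE mu) := by
      rw [mul_sub, pow_mul_EE hQE, mul_one]
    rw [Finset.sum_range_succ, ih, this, ← hG, ← mul_assoc, ← add_mul]
    congr 1
    rw [pow_succ]; noncomm_ring

lemma summable_a (hP : IsConsensus P) (hmu : IsInvMeasure P mu)
    (hcomm : Pstar P mu * P = P * Pstar P mu) (i : Fin n) :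
    Summable (fun t : ℕ => ((Pstar P mu * P) ^ t - EE mu) i i) := by
  obtain ⟨G, hG, -, -⟩ := exists_green hP hmu
  refine summable_of_sum_range_le (c := G i i + ∑ j, |G j i|) (fun t => ?_) (fun T => ?_)
  · have h := key_entry hP hmu hcomm t i i
    have h2 : 0 ≤ mu i * (((Pstar P mu * P) ^ t - EE mu) i i) := by
      rw [h]
      exact Finset.sum_nonneg fun k _ => mul_nonneg (hmu.1 k).le (mul_self_nonneg _)
    exact nonneg_of_mul_nonneg_right h2 (hmu.1 i)
  · have h := congrFun (congrFun (partial_sum hP hmu hG T) i) i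
    rw [Matrix.sum_apply] at h
    rw [h, sub_mul, one_mul, Matrix.sub_apply, sub_eq_add_neg, Matrix.mul_apply,
      ← Finset.sum_neg_distrib]
    refine add_le_add le_rfl (Finset.sum_le_sum fun j _ => ?_)
    have a1 := (Q_row hP hmu T).1 i j
    have a2 := Q_le_one hP hmu T i j
    calc -(((Pstar P mu * P) ^ T) i j * G j i) = ((Pstar P mu * P) ^ T) i j * (-G j i) := by ring
      _ ≤ ((Pstar P mu * P) ^ T) i j * |G j i| := by gcongr; exact neg_le_abs _
      _ ≤ 1 * |G j i| := by gcongr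
      _ = _ := one_mul _

open Filter Topology in
lemma Q_tendsto (hP : IsConsensus P) (hmu : IsInvMeasure P mu)
    (hcomm : Pstar P mu * P = P * Pstar P mu) (i j : Fin n) :
    Tendsto (fun t : ℕ => ((Pstar P mu * P) ^ t - EE mu) i j) atTop (𝓝 0) := by
  have h1 : ∀ k i, Tendsto (fun t : ℕ => (P ^ t - EE mu) k i) atTop (𝓝 0) := by
    intro k i
    have h0 := ((summable_a hP hmu hcomm i).tendsto_atTop_zero.const_mul (mu i)).const_mul (mu k)⁻¹
    rw [mul_zero, mul_zero] at h0
    have h2 : Tendsto (fun t : ℕ => (P ^ t - EE mu) k i ^ 2) atTop (𝓝 0) := by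
      refine squeeze_zero (fun t => sq_nonneg _) (fun t => ?_) h0
      rw [key_entry hP hmu hcomm t i i]
      have := Finset.single_le_sum (f := fun k => mu k * ((P ^ t - EE mu) k i * (P ^ t - EE mu) k i))
        (fun k _ => mul_nonneg (hmu.1 k).le (mul_self_nonneg _)) (Finset.mem_univ k)
      rw [← div_eq_inv_mul, le_div_iff₀ (hmu.1 k)]
      calc _ = mu k * ((P ^ t - EE mu) k i * (P ^ t - EE mu) k i) := by ring
        _ ≤ _ := this
    have h3 := h2.sqrt
    simp only [Real.sqrt_sq_eq_abs, Real.sqrt_zero] at h3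
    exact (tendsto_zero_iff_abs_tendsto_zero _).2 h3
  have h2 : ∀ t : ℕ, ((Pstar P mu * P) ^ t - EE mu) i j =
      (mu i)⁻¹ * ∑ k, mu k * ((P ^ t - EE mu) k i * (P ^ t - EE mu) k j) := by
    intro t
    rw [← key_entry hP hmu hcomm, inv_mul_cancel_left₀ (hmu.1 i).ne']
  simp only [h2]
  have := (tendsto_finsetSum Finset.univ
    (fun k _ => ((h1 k i).mul (h1 k j)).const_mul (mu k))).const_mul (mu i)⁻¹
  simpa using this

open Filter Topology in
lemma hasSum_a (hP : IsConsensus P) (hmu : IsInvMeasure P mu)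
    (hcomm : Pstar P mu * P = P * Pstar P mu)
    {G : Matrix (Fin n) (Fin n) ℝ} (hG : (1 - Pstar P mu * P) * G = 1 - EE mu)
    (hEG : EE mu * G = 0) (i : Fin n) :
    HasSum (fun t : ℕ => ((Pstar P mu * P) ^ t - EE mu) i i) (G i i) := by
  have hs := (summable_a hP hmu hcomm i).hasSum
  have h1 := hs.tendsto_sum_nat
  have h2 : ∀ T : ℕ, ∑ t ∈ Finset.range T, ((Pstar P mu * P) ^ t - EE mu) i i =
      G i i - ∑ j, ((Pstar P mu * P) ^ T - EE mu) i j * G j i := by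
    intro T
    have h := congrFun (congrFun (partial_sum hP hmu hG T) i) i
    rw [Matrix.sum_apply] at h
    have e : (1 - (Pstar P mu * P) ^ T) * G = G - ((Pstar P mu * P) ^ T - EE mu) * G := by
      rw [sub_mul, sub_mul, hEG, one_mul, sub_zero]
    rw [h, e, Matrix.sub_apply, Matrix.mul_apply]
  have h3 : Tendsto (fun T : ℕ => G i i - ∑ j, ((Pstar P mu * P) ^ T - EE mu) i j * G j i)
      atTop (𝓝 (G i i)) := by
    have := (tendsto_finsetSum Finset.univ
      (fun j _ => (Q_tendsto hP hmu hcomm i j).mul_const (G j i))).const_sub (G i i)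
    simpa using this
  simp only [h2] at h1
  rw [← tendsto_nhds_unique h1 h3]
  exact hs

lemma lap_eq (hP : IsConsensus P) (hmu : IsInvMeasure P mu) :
    lap ((n : ℝ) • (Pᵀ * Matrix.diagonal mu * P)) =
      (n : ℝ) • (Matrix.diagonal mu * (1 - Pstar P mu * P)) := by
  have h : Pᵀ * Matrix.diagonal mu * P = Matrix.diagonal mu * (Pstar P mu * P) := by
    rw [← diag_Pstar hmu, mul_assoc]
  have hr := (Q_row hP hmu 1).2
  rw [pow_one] at hr
  rw [h, lap, mul_sub, smul_sub, mul_one]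
  congr 1
  ext i j
  simp only [Matrix.smul_apply, Matrix.diagonal_mul, smul_eq_mul, Matrix.diagonal_apply]
  rw [← Finset.mul_sum, ← Finset.mul_sum, hr]
  simp

/-- resistance formula -/
noncomputable def rr {n : ℕ} (mu : Fin n → ℝ) (G : Matrix (Fin n) (Fin n) ℝ) (a b : Fin n) : ℝ :=
  (n : ℝ)⁻¹ * (G a a / mu a - G a b / mu b - G b a / mu a + G b b / mu b)

/-- injected current, divided by the measure -/
noncomputable def cur {n : ℕ} (mu : Fin n → ℝ) (a b : Fin n) : Fin n → ℝ :=
  fun i => (mu i)⁻¹ * ((Pi.single a 1 - Pi.single b 1 : Fin n → ℝ) i)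

lemma G_cur (G : Matrix (Fin n) (Fin n) ℝ) (a b c : Fin n) :
    (G *ᵥ cur mu a b) c = G c a / mu a - G c b / mu b := by
  simp only [Matrix.mulVec, dotProduct, cur, Pi.sub_apply, Pi.single_apply, mul_sub,
    Finset.sum_sub_distrib]
  simp [div_eq_mul_inv]

lemma rr_eq (G : Matrix (Fin n) (Fin n) ℝ) (a b : Fin n) :
    rr mu G a b = (n : ℝ)⁻¹ * ((G *ᵥ cur mu a b) a - (G *ᵥ cur mu a b) b) := by
  rw [G_cur, G_cur, rr]; ring

lemma rr_nonneg (hP : IsConsensus P) (hmu : IsInvMeasure P mu)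
    {G : Matrix (Fin n) (Fin n) ℝ} (hG : (1 - Pstar P mu * P) * G = 1 - EE mu)
    (a b : Fin n) : 0 ≤ rr mu G a b := by
  rw [rr_eq]
  apply mul_nonneg (by positivity)
  have h1 : (1 - Pstar P mu * P) *ᵥ (G *ᵥ cur mu a b) = cur mu a b := by
    rw [Matrix.mulVec_mulVec, hG, Matrix.sub_mulVec, Matrix.one_mulVec]
    have : EE mu *ᵥ cur mu a b = 0 := by
      funext i
      rw [G_cur, EE_apply, EE_apply, div_self (hmu.1 a).ne', div_self (hmu.1 b).ne']
      simp
    rw [this, sub_zero]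
  set w := G *ᵥ cur mu a b with hw
  have h2 := variance_nonneg hP hmu w
  rw [Matrix.sub_mulVec, Matrix.one_mulVec] at h1
  have h3 : ∀ i, w i - ((Pstar P mu * P) *ᵥ w) i = cur mu a b i := fun i => congrFun h1 i
  simp only [h3] at h2
  have h4 : ∀ i, mu i * (w i * cur mu a b i) =
      w i * ((Pi.single a 1 - Pi.single b 1 : Fin n → ℝ) i) := by
    intro i
    have := (hmu.1 i).ne'
    rw [cur]; field_simp
  simp only [h4, Pi.sub_apply, Pi.single_apply, mul_sub, Finset.sum_sub_distrib] at h2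
  simpa using h2

lemma effRes_le (hn : 0 < n) (hP : IsConsensus P) (hmu : IsInvMeasure P mu)
    {G : Matrix (Fin n) (Fin n) ℝ} (hG : (1 - Pstar P mu * P) * G = 1 - EE mu)
    (hG' : G * (1 - Pstar P mu * P) = 1 - EE mu) (a b : Fin n) :
    effRes ((n : ℝ) • (Pᵀ * Matrix.diagonal mu * P)) a b ≤ rr mu G a b := by
  rw [effRes]
  split_ifs with h
  · have hv := h.choose_spec
    set v := h.choose
    apply le_of_eq
    have hn' : (n : ℝ) ≠ 0 := by positivity
    rw [lap_eq hP hmu, Matrix.smul_mulVec, ← Matrix.mulVec_mulVec] at hv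
    have h1 : (1 - Pstar P mu * P) *ᵥ v = (n : ℝ)⁻¹ • cur mu a b := by
      funext i
      have := (hmu.1 i).ne'
      have hi := congrFun hv i
      rw [Pi.smul_apply, Matrix.mulVec_diagonal] at hi
      rw [Pi.smul_apply, cur, ← hi, smul_eq_mul, smul_eq_mul]
      field_simp
    have h2 : (1 - EE mu) *ᵥ v = (n : ℝ)⁻¹ • (G *ᵥ cur mu a b) := by
      rw [← hG', ← Matrix.mulVec_mulVec, h1, Matrix.mulVec_smul]
    rw [Matrix.sub_mulVec, Matrix.one_mulVec] at h2
    have h3 := congrFun h2 a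
    have h4 := congrFun h2 b
    have h5 : (EE mu *ᵥ v) a = (EE mu *ᵥ v) b := by
      simp only [Matrix.mulVec, dotProduct, EE_apply]
    simp only [Pi.sub_apply, Pi.smul_apply, smul_eq_mul] at h3 h4
    rw [rr_eq, mul_sub, ← h3, ← h4, h5]; ring
  · exact rr_nonneg hP hmu hG a b

lemma rr_sum (hmu : IsInvMeasure P mu)
    {G : Matrix (Fin n) (Fin n) ℝ} (hEG : EE mu * G = 0) :
    ∑ a, ∑ b, mu a * mu b * rr mu G a b = 2 * (n : ℝ)⁻¹ * ∑ i, G i i := by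
  have hz : ∀ b, ∑ a, mu a * G a b = 0 := by
    intro b
    have := congrFun (congrFun hEG b) b
    simpa [Matrix.mul_apply, EE_apply] using this
  have h : ∀ a b, mu a * mu b * rr mu G a b =
      (n : ℝ)⁻¹ * (G a a * mu b - mu a * G a b - mu b * G b a + mu a * G b b) := by
    intro a b
    have := (hmu.1 a).ne'
    have := (hmu.1 b).ne'
    rw [rr]; field_simp
  simp only [h, ← Finset.mul_sum, Finset.sum_add_distrib, Finset.sum_sub_distrib]
  have hz2 : ∑ a, mu a * ∑ b, G a b = 0 := by
    simp only [Finset.mul_sum]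
    rw [Finset.sum_comm]
    simp only [hz, Finset.sum_const_zero]
  rw [hz2]
  simp only [hz, ← Finset.mul_sum, ← Finset.sum_mul, hmu.2.1, Finset.sum_const_zero]
  ring

end

/-- Lower bounds on the LQ cost and weighted LQ cost when `P*P = PP*`. -/
theorem stmt10 {n : ℕ} (P : Matrix (Fin n) (Fin n) ℝ) (mu : Fin n → ℝ)
    (hP : IsConsensus P) (hmu : IsInvMeasure P mu)
    (hcomm : Pstar P mu * P = P * Pstar P mu)
    (mumin mumax : ℝ)
    (hmin : (∀ i, mumin ≤ mu i) ∧ ∃ i, mu i = mumin)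
    (hmax : (∀ i, mu i ≤ mumax) ∧ ∃ i, mu i = mumax) :
    mumin ^ 3 * (n : ℝ) ^ 2 / mumax *
        avgRes ((n : ℝ) • (Pᵀ * Matrix.diagonal mu * P)) ≤ LQcost P mu ∧
      mumin ^ 3 * (n : ℝ) ^ 3 *
        avgRes ((n : ℝ) • (Pᵀ * Matrix.diagonal mu * P)) ≤ LQcostW P mu := by
  obtain ⟨i0, hi0⟩ := hmin.2
  have hn : 0 < n := i0.pos
  have hnR : (0 : ℝ) < n := by exact_mod_cast hn
  have hm0 : 0 < mumin := hi0 ▸ hmu.1 i0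
  have hM0 : 0 < mumax := hm0.trans_le ((hmin.1 i0).trans (hmax.1 i0))
  obtain ⟨G, hG, hG', hEG⟩ := exists_green hP hmu
  set R := avgRes ((n : ℝ) • (Pᵀ * Matrix.diagonal mu * P)) with hR
  have hs := hasSum_a hP hmu hcomm hG hEG
  -- the weighted sequence
  have hw : HasSum (fun t : ℕ => ∑ i, mu i * (((Pstar P mu * P) ^ t - EE mu) i i))
      (∑ i, mu i * G i i) := hasSum_sum fun i _ => (hs i).mul_left (mu i)
  have hterm : ∀ t : ℕ, ∀ i, mu i * (((Pstar P mu * P) ^ t - EE mu) i i) =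
      ∑ k, mu k * (P ^ t - EE mu) k i ^ 2 := by
    intro t i
    rw [key_entry hP hmu hcomm]
    exact Finset.sum_congr rfl fun k _ => by ring
  have hGnn : ∀ i, 0 ≤ G i i := by
    intro i
    refine (hs i).nonneg fun t => ?_
    refine nonneg_of_mul_nonneg_right ?_ (hmu.1 i)
    rw [hterm]
    exact Finset.sum_nonneg fun k _ => mul_nonneg (hmu.1 k).le (sq_nonneg _)
  have hJw : LQcostW P mu = ∑ i, mu i * G i i := by
    rw [LQcostW, ← hw.tsum_eq]
    exact tsum_congr fun t => trace_term hP hmu hcomm t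
  have hRle : mumin ^ 2 * (n : ℝ) ^ 3 * R ≤ ∑ i, G i i := by
    have h1 : mumin ^ 2 * ∑ a, ∑ b, effRes ((n : ℝ) • (Pᵀ * Matrix.diagonal mu * P)) a b ≤
        ∑ a, ∑ b, mu a * mu b * rr mu G a b := by
      simp only [Finset.mul_sum]
      refine Finset.sum_le_sum fun a _ => Finset.sum_le_sum fun b _ => ?_
      have r0 := rr_nonneg hP hmu hG a b
      calc _ ≤ mumin ^ 2 * rr mu G a b := by
            gcongr; exact effRes_le hn hP hmu hG hG' a b
        _ ≤ _ := by
            rw [sq]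
            have := hmin.1 a
            have := hmin.1 b
            have := (hmu.1 a).le
            gcongr
    rw [rr_sum hmu hEG] at h1
    have h2 : ∑ a, ∑ b, effRes ((n : ℝ) • (Pᵀ * Matrix.diagonal mu * P)) a b =
        2 * (n : ℝ) ^ 2 * R := by
      rw [hR, avgRes]; field_simp
    rw [h2] at h1
    have h3 := mul_le_mul_of_nonneg_left h1 (show (0 : ℝ) ≤ n / 2 by positivity)
    calc _ = (n : ℝ) / 2 * (mumin ^ 2 * (2 * (n : ℝ) ^ 2 * R)) := by ring
      _ ≤ _ := h3
      _ = _ := by field_simp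
  have hfin : mumin ^ 3 * (n : ℝ) ^ 3 * R ≤ ∑ i, mu i * G i i := by
    calc _ = mumin * (mumin ^ 2 * (n : ℝ) ^ 3 * R) := by ring
      _ ≤ mumin * ∑ i, G i i := by gcongr
      _ = ∑ i, mumin * G i i := Finset.mul_sum _ _ _
      _ ≤ _ := Finset.sum_le_sum fun i _ => mul_le_mul_of_nonneg_right (hmin.1 i) (hGnn i)
  refine ⟨?_, by rw [hJw]; exact hfin⟩
  have hswap : ∀ t : ℕ, ∑ i, mu i * (((Pstar P mu * P) ^ t - EE mu) i i) =
      ∑ k, ∑ i, mu k * (P ^ t - EE mu) k i ^ 2 := by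
    intro t
    simp only [hterm]
    exact Finset.sum_comm
  have hlow : ∀ t : ℕ, mumin * ∑ k, ∑ i, (P ^ t - EE mu) k i ^ 2 ≤
      ∑ i, mu i * (((Pstar P mu * P) ^ t - EE mu) i i) := by
    intro t
    rw [hswap]
    simp only [Finset.mul_sum]
    exact Finset.sum_le_sum fun k _ => Finset.sum_le_sum fun i _ =>
      mul_le_mul_of_nonneg_right (hmin.1 k) (sq_nonneg _)
  have hup : ∀ t : ℕ, ∑ i, mu i * (((Pstar P mu * P) ^ t - EE mu) i i) ≤
      mumax * ∑ k, ∑ i, (P ^ t - EE mu) k i ^ 2 := by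
    intro t
    rw [hswap]
    simp only [Finset.mul_sum]
    exact Finset.sum_le_sum fun k _ => Finset.sum_le_sum fun i _ =>
      mul_le_mul_of_nonneg_right (hmax.1 k) (sq_nonneg _)
  have hsumm : Summable (fun t : ℕ => ∑ k, ∑ i, (P ^ t - EE mu) k i ^ 2) := by
    refine Summable.of_nonneg_of_le (fun t => by positivity) (fun t => ?_)
      (hw.summable.mul_left mumin⁻¹)
    rw [← div_eq_inv_mul, le_div_iff₀ hm0, mul_comm]
    exact hlow t
  have hJ : ∑ i, mu i * G i i ≤ mumax * (n * LQcost P mu) := by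
    have e : (n : ℝ) * LQcost P mu = ∑' t : ℕ, ∑ k, ∑ i, (P ^ t - EE mu) k i ^ 2 := by
      rw [LQcost, ← mul_assoc, mul_one_div_cancel hnR.ne', one_mul]; rfl
    rw [e, ← hw.tsum_eq, ← tsum_mul_left]
    exact hw.summable.tsum_le_tsum hup (hsumm.mul_left _)
  have hc := hfin.trans hJ
  rw [div_mul_eq_mul_div, div_le_iff₀ hM0]
  refine le_of_mul_le_mul_left ?_ hnR
  calc _ = mumin ^ 3 * (n : ℝ) ^ 3 * R := by ring
    _ ≤ _ := hc
    _ = _ := by ring
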